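/- Let p be a prime, k a field of characteristic p, G a finite group, and P a Sylow p-subgroup of G. Fix n ≥ 1 and let G act on the polynomial ring R = k[x_{(g,i)} : g ∈ G, i ∈ Fin n] by permuting variables: h·x_{(g,i)} = x_{(hg,i)} (the free permutation module (kG)ⁿ). Let λ : Fin n → k be not identically zero and let v : G × Fin n → k be the point v(g,i) = λ(i) (a nonzero G-fixed point of (kG)ⁿ). Then the least positive degree of a G-invariant homogeneous polynomial f ∈ R with f(v) ≠ 0 equals |P|; that is, every G-invariant homogeneous polynomial of positive degree with f(v) ≠ 0 has degree at least |P|, and there exists such an f of degree exactly |P|. -/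

import Mathlib

open MvPolynomial

/-!
If `f` is invariant under a `p`-group `Q` and `v` is a `Q`-fixed point, then the terms of `f` at `v`
are constant on `Q`-orbits of monomials, so modulo `p` only the `Q`-fixed monomials contribute to
`f(v)`. If moreover `Q` acts freely on the variables where `v` does not vanish, a fixed monomial
with nonzero contribution is a product of full `Q`-orbits of variables, so `|Q|` divides its degree.
Taking `Q = P` gives the lower bound. It is attained by the relative transfer from `P` to `G` of the
monomial `∏ h ∈ P, X (h • x)` with `v x ≠ 0`, whose value at `v` is `[G : P] * v x ^ |P|`.
-/

section LevelSets

variable {Q X A : Type*} [Group Q] [MulAction Q X]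

/-- The level set `{x | φ x = c}` of an invariant function `φ`, as an invariant subset; it makes
the theorems on cardinalities of sets with a group action applicable to level sets. -/
def levelSubMulAction (φ : X → A) (hφ : ∀ (q : Q) (x : X), φ (q • x) = φ x) (c : A) :
    SubMulAction Q X where
  carrier := φ ⁻¹' {c}
  smul_mem' q x hx := (hφ q x).trans hx

theorem finsum_eq_finsum_card_preimage_nsmul [AddCommMonoid A] {φ : X → A}
    (hφ : φ.HasFiniteSupport) : ∑ᶠ x, φ x = ∑ᶠ c, Nat.card (φ ⁻¹' {c}) • c := by
  classical
  let s := Set.Finite.toFinset hφ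
  have mem_s {x : X} : x ∈ s ↔ φ x ≠ 0 := Set.Finite.mem_toFinset hφ
  have card_level (c : A) (hc : c ≠ 0) :
      Nat.card (φ ⁻¹' {c}) = (s.filter (φ · = c)).card := by
    rw [Nat.card_coe_set_eq, ← Set.ncard_coe_finset]
    congr 1
    ext x
    rw [Finset.mem_coe, Finset.mem_filter, mem_s]
    exact ⟨fun h => ⟨h.trans_ne hc, h⟩, And.right⟩
  have support_subset : (fun c : A => Nat.card (φ ⁻¹' {c}) • c).support ⊆ s.image φ := by
    intro c hc
    have hc0 : c ≠ 0 := right_ne_zero_of_smul hc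
    have : (s.filter (φ · = c)).card ≠ 0 := card_level c hc0 ▸ left_ne_zero_of_smul hc
    obtain ⟨x, hx⟩ := Finset.card_ne_zero.mp this
    exact Finset.mem_coe.mpr (Finset.mem_image.mpr ⟨x, Finset.mem_filter.mp hx⟩)
  rw [finsum_eq_sum φ hφ, finsum_eq_sum_of_support_subset _ support_subset]
  refine (Finset.sum_comp id φ).trans (Finset.sum_congr rfl fun c hc => ?_)
  obtain ⟨x, hx, rfl⟩ := Finset.mem_image.mp hc
  rw [card_level _ (mem_s.mp hx), id]

theorem exists_mem_fixedPoints_of_finsum_ne_zero [NonAssocSemiring A] {p : ℕ} [Fact p.Prime]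
    [CharP A p] (hQ : IsPGroup p Q) {φ : X → A} (hφ : ∀ (q : Q) (x : X), φ (q • x) = φ x)
    (hsum : ∑ᶠ x, φ x ≠ 0) : ∃ x ∈ MulAction.fixedPoints Q X, φ x ≠ 0 := by
  rw [finsum_eq_finsum_card_preimage_nsmul (hasFiniteSupport_of_finsum_ne_zero hsum)] at hsum
  obtain ⟨c, hc⟩ : ∃ c : A, Nat.card (φ ⁻¹' {c}) • c ≠ 0 := by
    by_contra! hzero
    exact hsum (finsum_eq_zero_of_forall_eq_zero hzero)
  have card_level : ¬ p ∣ Nat.card (φ ⁻¹' {c}) := fun hdvd =>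
    hc (by rw [nsmul_eq_mul, (CharP.cast_eq_zero_iff A p _).mpr hdvd, zero_mul])
  obtain ⟨⟨x, rfl⟩, hx⟩ :=
    hQ.nonempty_fixed_point_of_prime_not_dvd_card (levelSubMulAction φ hφ c) card_level
  exact ⟨x, fun q => congrArg Subtype.val (hx q), right_ne_zero_of_smul hc⟩

theorem card_dvd_card_of_stabilizer_eq_bot (h : ∀ x : X, MulAction.stabilizer Q x = ⊥) :
    Nat.card Q ∣ Nat.card X := by
  rw [Nat.card_congr (MulAction.selfEquivOrbitsQuotientProd h), Nat.card_prod]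
  exact dvd_mul_left _ _

theorem card_dvd_degree_of_invariant {m : X →₀ ℕ} (hm : ∀ (q : Q) (x : X), m (q • x) = m x)
    (hfree : ∀ x ∈ m.support, MulAction.stabilizer Q x = ⊥) : Nat.card Q ∣ m.degree := by
  have degree_eq : m.degree = ∑ᶠ x, m x :=
    (finsum_eq_sum_of_support_subset _ m.fun_support_eq.subset).symm
  rw [degree_eq, finsum_eq_finsum_card_preimage_nsmul m.hasFiniteSupport]
  refine finsum_induction (Nat.card Q ∣ ·) (dvd_zero _) (fun _ _ => dvd_add) fun c => ?_
  obtain rfl | hc := eq_or_ne c 0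
  · exact dvd_zero _
  · refine Dvd.dvd.mul_right (card_dvd_card_of_stabilizer_eq_bot
      (X := levelSubMulAction m hm c) fun x => ?_) c
    rw [SubMulAction.stabilizer_of_subMul]
    exact hfree x (Finsupp.mem_support_iff.mpr fun h => hc (x.2.symm.trans h))

end LevelSets

section LowerBound

variable {p : ℕ} [Fact p.Prime] {Q σ k : Type*} [Group Q] [MulAction Q σ]

attribute [local instance] Finsupp.comapMulAction in
theorem exists_invariant_mem_support_of_eval_ne_zero [CommSemiring k] [CharP k p]
    (hQ : IsPGroup p Q) {f : MvPolynomial σ k} (hf : ∀ q : Q, rename (q • ·) f = f)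
    {v : σ → k} (hv : ∀ (q : Q) (x : σ), v (q • x) = v x) (hfv : eval v f ≠ 0) :
    ∃ m ∈ f.support, (∀ (q : Q) (x : σ), m (q • x) = m x) ∧ ∀ x ∈ m.support, v x ≠ 0 := by
  let term (m : σ →₀ ℕ) : k := coeff m f * m.prod (v · ^ ·)
  have term_smul (q : Q) (m : σ →₀ ℕ) : term (q • m) = term m := by
    have coeff_smul : coeff (q • m) f = coeff m f := by
      conv_lhs => rw [← hf q]
      exact coeff_rename_mapDomain _ (MulAction.injective q) f m
    have prod_smul : (q • m).prod (v · ^ ·) = m.prod (v · ^ ·) := by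
      rw [Finsupp.comapSMul_def, Finsupp.prod_mapDomain_index_inj (MulAction.injective q)]
      simp only [hv]
    simp only [term, coeff_smul, prod_smul]
  have eval_eq_finsum : eval v f = ∑ᶠ m, term m := by
    rw [eval_eq, finsum_eq_sum_of_support_subset]
    · rfl
    · exact fun m hm => mem_support_iff.mpr (left_ne_zero_of_mul hm)
  obtain ⟨m, hm, hterm⟩ :=
    exists_mem_fixedPoints_of_finsum_ne_zero hQ term_smul (eval_eq_finsum ▸ hfv)
  refine ⟨m, mem_support_iff.mpr (left_ne_zero_of_mul hterm), fun q x => ?_, fun x hx hvx => ?_⟩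
  · conv_lhs => rw [← hm q]
    rw [Finsupp.comapSMul_apply, inv_smul_smul]
  · refine right_ne_zero_of_mul hterm (Finset.prod_eq_zero hx ?_)
    simp only [hvx, zero_pow (Finsupp.mem_support_iff.mp hx)]

theorem card_dvd_degree_of_eval_ne_zero [CommSemiring k] [CharP k p] (hQ : IsPGroup p Q)
    {f : MvPolynomial σ k} (hf : ∀ q : Q, rename (q • ·) f = f) {e : ℕ} (hfe : f.IsHomogeneous e)
    {v : σ → k} (hv : ∀ (q : Q) (x : σ), v (q • x) = v x)
    (hfree : ∀ x, v x ≠ 0 → MulAction.stabilizer Q x = ⊥) (hfv : eval v f ≠ 0) :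
    Nat.card Q ∣ e := by
  obtain ⟨m, hmf, hm, hmv⟩ := exists_invariant_mem_support_of_eval_ne_zero hQ hf hv hfv
  have degree_eq : m.degree = e := by
    by_contra hne
    exact mem_support_iff.mp hmf (hfe.coeff_eq_zero hne)
  exact degree_eq ▸ card_dvd_degree_of_invariant hm fun x hx => hfree x (hmv x hx)

theorem stabilizer_eq_bot_of_not_dvd_card_stabilizer {G : Type*} [Group G] [MulAction G σ]
    {H : Subgroup G} (hH : IsPGroup p H) {x : σ}
    (hx : ¬ p ∣ Nat.card (MulAction.stabilizer G x)) : MulAction.stabilizer H x = ⊥ := by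
  have card_dvd : Nat.card (MulAction.stabilizer H x) ∣ Nat.card (MulAction.stabilizer G x) :=
    (MulAction.stabilizer G x).card_comap_dvd_of_injective H.subtype H.subtype_injective
  obtain hone | hdvd := (hH.to_subgroup (MulAction.stabilizer H x)).card_eq_or_dvd
  · exact Subgroup.card_eq_one.mp hone
  · exact absurd (hdvd.trans card_dvd) hx

end LowerBound

section Transfer

variable {G σ k : Type*} [Group G] [MulAction G σ] [CommSemiring k]

variable (k) in
/-- The monomial `∏ g ∈ q, X (g • x)` attached to a left coset `q` of a finite subgroup `H`. Summed
over all cosets, it is the relative transfer from `H` to `G` of the norm `∏ h ∈ H, X (h • x)`. -/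
noncomputable def cosetMonomial (H : Subgroup G) [Fintype H] (x : σ) :
    G ⧸ H → MvPolynomial σ k :=
  Quotient.lift (fun g => ∏ h : H, X ((g * h) • x)) fun a b hab => by
    let c : H := ⟨a⁻¹ * b, QuotientGroup.leftRel_apply.mp hab⟩
    calc ∏ h : H, X ((a * h) • x) = ∏ h : H, X ((a * (c * h : H)) • x) :=
          (Equiv.prod_comp (Equiv.mulLeft c) fun h : H => X ((a * h) • x)).symm
      _ = ∏ h : H, X ((b * h) • x) := by simp [c, mul_assoc]

section

variable (H : Subgroup G) [Fintype H] (x : σ)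

theorem cosetMonomial_mk (g : G) :
    cosetMonomial k H x (g : G ⧸ H) = ∏ h : H, X ((g * h) • x) :=
  rfl

theorem rename_smul_cosetMonomial (g : G) (q : G ⧸ H) :
    rename (g • ·) (cosetMonomial k H x q) = cosetMonomial k H x (g • q) := by
  induction q using QuotientGroup.induction_on with
  | H a =>
    rw [MulAction.Quotient.smul_coe]
    simp only [cosetMonomial_mk, map_prod, rename_X, smul_smul, smul_eq_mul, mul_assoc]

theorem isHomogeneous_cosetMonomial (q : G ⧸ H) :
    (cosetMonomial k H x q).IsHomogeneous (Nat.card H) := by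
  induction q using QuotientGroup.induction_on with
  | H a =>
    have := IsHomogeneous.prod Finset.univ (fun h : H => (X ((a * h) • x) : MvPolynomial σ k))
      (fun _ => 1) fun _ _ => isHomogeneous_X _ _
    simpa only [cosetMonomial_mk, Finset.sum_const, Finset.card_univ, smul_eq_mul, mul_one,
      Nat.card_eq_fintype_card] using this

theorem eval_cosetMonomial {v : σ → k} (hv : ∀ (g : G) (y : σ), v (g • y) = v y) (q : G ⧸ H) :
    eval v (cosetMonomial k H x q) = v x ^ Nat.card H := by
  induction q using QuotientGroup.induction_on with
  | H a =>
    simp only [cosetMonomial_mk, map_prod, eval_X, hv, Finset.prod_const, Finset.card_univ,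
      Nat.card_eq_fintype_card]

end

theorem exists_invariant_isHomogeneous_card_eval_eq [Finite G] (H : Subgroup G) (x : σ)
    {v : σ → k} (hv : ∀ (g : G) (y : σ), v (g • y) = v y) :
    ∃ f : MvPolynomial σ k, (∀ g : G, rename (g • ·) f = f) ∧ f.IsHomogeneous (Nat.card H) ∧
      eval v f = H.index * v x ^ Nat.card H := by
  have := Fintype.ofFinite H
  have := Fintype.ofFinite (G ⧸ H)
  refine ⟨∑ q, cosetMonomial k H x q, fun g => ?_, ?_, ?_⟩
  · simp only [map_sum, rename_smul_cosetMonomial]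
    exact Equiv.sum_comp (MulAction.toPerm g) (cosetMonomial k H x)
  · exact IsHomogeneous.sum _ _ _ fun q _ => isHomogeneous_cosetMonomial H x q
  · simp only [map_sum, eval_cosetMonomial H x hv, Finset.sum_const, Finset.card_univ,
      nsmul_eq_mul, Subgroup.index, Nat.card_eq_fintype_card]

end Transfer

theorem stabilizer_prod_eq_bot {G α β : Type*} [Group G] [MulAction G α] [IsCancelSMul G α]
    [MulAction G β] (x : α × β) : MulAction.stabilizer G x = ⊥ := by
  rw [eq_bot_iff, ← IsCancelSMul.stabilizer_eq_bot x.1]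
  exact fun g hg => congrArg Prod.fst hg

theorem isLeast_degree_invariant_free_module_eq_card_sylow_general
    {p : ℕ} (hp : p.Prime) {k : Type*} [CommRing k] [IsReduced k] [CharP k p]
    {G σ : Type*} [Group G] [Finite G] [MulAction G σ] (P : Sylow p G)
    {v : σ → k} (hv : ∀ (g : G) (x : σ), v (g • x) = v x) (hv0 : v ≠ 0)
    (hstab : ∀ x, v x ≠ 0 → ¬ p ∣ Nat.card (MulAction.stabilizer G x)) :
    IsLeast {e : ℕ | 0 < e ∧ ∃ f : MvPolynomial σ k,
      (∀ g : G, rename (g • ·) f = f) ∧ f.IsHomogeneous e ∧ eval v f ≠ 0} (Nat.card P) := by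
  have := Fact.mk hp
  constructor
  · obtain ⟨x, hx⟩ := Function.ne_iff.mp hv0
    obtain ⟨f, hf, hfP, hfv⟩ := exists_invariant_isHomogeneous_card_eval_eq (P : Subgroup G) x hv
    have index_isUnit : IsUnit ((P : Subgroup G).index : k) :=
      (CharP.isUnit_natCast_iff hp).mpr P.not_dvd_index
    refine ⟨Nat.card_pos, f, hf, hfP, ?_⟩
    rw [hfv, Ne, index_isUnit.mul_right_eq_zero]
    exact pow_ne_zero _ hx
  · rintro e ⟨he, f, hf, hfe, hfv⟩
    exact Nat.le_of_dvd he <| card_dvd_degree_of_eval_ne_zero P.isPGroup' (fun g => hf g) hfe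
      (fun g => hv g) (fun x hx => stabilizer_eq_bot_of_not_dvd_card_stabilizer P.isPGroup'
        (hstab x hx)) hfv

/-- Let `p` be a prime, `k` a field of characteristic `p`, `G` a finite group,
and `P` a Sylow `p`-subgroup of `G`. Fix `n ≥ 1` and let `G` act on
`R = k[x_{(g,i)} : g ∈ G, i ∈ Fin n]` by permuting variables, `h·x_{(g,i)} = x_{(hg,i)}`
(the free permutation module `(kG)ⁿ`). Let `λ : Fin n → k` be not identically zero and let
`v : G × Fin n → k` be the point `v(g,i) = λ(i)` (a nonzero `G`-fixed point of `(kG)ⁿ`).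
Then the least positive degree of a `G`-invariant homogeneous polynomial `f ∈ R` with
`f(v) ≠ 0` equals `|P|`. -/
theorem isLeast_degree_invariant_free_module_eq_card_sylow
    (p : ℕ) (hp : p.Prime) {k : Type*} [Field k] [CharP k p]
    {G : Type*} [Group G] [Fintype G] (P : Sylow p G)
    (n : ℕ) (hn : 1 ≤ n) (lam : Fin n → k) (hlam : lam ≠ 0) :
    IsLeast {e : ℕ | 0 < e ∧ ∃ f : MvPolynomial (G × Fin n) k,
        (∀ h : G, MvPolynomial.rename (fun gi : G × Fin n => (h * gi.1, gi.2)) f = f) ∧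
        f.IsHomogeneous e ∧
        MvPolynomial.eval (fun gi : G × Fin n => lam gi.2) f ≠ 0}
      (Nat.card P) := by
  let _ : MulAction G (Fin n) := .compHom (Fin n) (1 : G →* Equiv.Perm (Fin n))
  exact isLeast_degree_invariant_free_module_eq_card_sylow_general hp P (fun _ _ => rfl)
    (fun h => hlam (funext fun i => congrFun h (1, i))) fun x _ => by
      simpa only [stabilizer_prod_eq_bot x, Subgroup.card_bot] using hp.not_dvd_one
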